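/- Let (A, ≺_ω, ≻_ω, Ω) be a pre-anti-flexible family algebra, and define x ▷_ω y := x ≻_ω y − y ≺_ω x for ω ∈ Ω. Then for all x, y ∈ A and α, β ∈ Ω, x ▷_α y − y ▷_β x = (x ≻_α y + x ≺_β y) − (y ≻_β x + y ≺_α x); consequently the family of brackets [x,y]_{α,β} := x ▷_α y − y ▷_β x turns A into an Ω-relative Lie algebra, coinciding with the Ω-relative Lie algebra obtained as the commutator of the product x ∗_{α,β} y := x ≻_α y + x ≺_β y. -/

import Mathlib

/-!
The product `x ∗_{α,β} y = x ≻_α y + x ≺_β y` is anti-flexible: its associator is unchanged when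
the arguments and the indices are both reversed. Indeed the associator splits into three
differences; the first axiom says that reversal fixes the middle one, and the second that it
exchanges the outer two. On the other hand, the Jacobi sum of a commutator is an alternating sum of
six associators, which pair off under reversal, so it vanishes for an anti-flexible product.
-/

section FamilyProducts

variable {k Ω A : Type*} [CommSemiring k] [AddCommGroup A] [Module k A]

/-- The associator of a product `∗_{α,β}`, where the product of elements of indices `α` and `β` is
regarded as having index `α * β`. -/
def relAssociator [Mul Ω] (m : Ω → Ω → A →ₗ[k] A →ₗ[k] A) (α β γ : Ω) (x y z : A) : A :=
  m (α * β) γ (m α β x y) z - m α (β * γ) x (m β γ y z)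

/-- Anti-flexibility of a product `∗_{α,β}`: the associator is invariant under reversal of its
arguments together with their indices. -/
def IsRelAntiFlexible [Mul Ω] (m : Ω → Ω → A →ₗ[k] A →ₗ[k] A) : Prop :=
  ∀ (α β γ : Ω) (x y z : A), relAssociator m α β γ x y z = relAssociator m γ β α z y x

/-- The commutator `x ∗_{α,β} y - y ∗_{β,α} x`, as a family of bilinear maps. -/
def relCommutator (m : Ω → Ω → A →ₗ[k] A →ₗ[k] A) (α β : Ω) : A →ₗ[k] A →ₗ[k] A :=
  m α β - (m β α).flip

/-- The axioms of an `Ω`-relative Lie algebra, with `br α β x y` standing for `[x,y]_{α,β}`. -/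
structure IsRelativeLie [Mul Ω] (br : Ω → Ω → A →ₗ[k] A →ₗ[k] A) : Prop where
  add_swap : ∀ (α β : Ω) (x y : A), br α β x y + br β α y x = 0
  jacobi : ∀ (α β γ : Ω) (x y z : A),
    br (α * β) γ (br α β x y) z + br (β * γ) α (br β γ y z) x +
      br (γ * α) β (br γ α z x) y = 0

theorem relCommutator_apply (m : Ω → Ω → A →ₗ[k] A →ₗ[k] A) (α β : Ω) (x y : A) :
    relCommutator m α β x y = m α β x y - m β α y x :=
  rfl

theorem relCommutator_add_swap (m : Ω → Ω → A →ₗ[k] A →ₗ[k] A) (α β : Ω) (x y : A) :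
    relCommutator m α β x y + relCommutator m β α y x = 0 := by
  simp only [relCommutator_apply, sub_add_sub_cancel, sub_self]

theorem relCommutator_jacobi_sum_eq_relAssociator [CommMagma Ω]
    (m : Ω → Ω → A →ₗ[k] A →ₗ[k] A) (α β γ : Ω) (x y z : A) :
    relCommutator m (α * β) γ (relCommutator m α β x y) z +
        relCommutator m (β * γ) α (relCommutator m β γ y z) x +
        relCommutator m (γ * α) β (relCommutator m γ α z x) y =
      (relAssociator m α β γ x y z - relAssociator m γ β α z y x) +
        (relAssociator m β γ α y z x - relAssociator m α γ β x z y) +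
        (relAssociator m γ α β z x y - relAssociator m β α γ y x z) := by
  simp only [relCommutator_apply, relAssociator, map_sub, LinearMap.sub_apply,
    mul_comm β α, mul_comm γ β, mul_comm γ α]
  abel

theorem IsRelAntiFlexible.isRelativeLie_relCommutator [CommMagma Ω]
    {m : Ω → Ω → A →ₗ[k] A →ₗ[k] A} (hm : IsRelAntiFlexible m) :
    IsRelativeLie (relCommutator m) where
  add_swap := relCommutator_add_swap m
  jacobi α β γ x y z := by
    rw [relCommutator_jacobi_sum_eq_relAssociator, hm α β γ, hm β γ α, hm γ α β]
    simp only [sub_self, add_zero]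

/-- The axioms of a pre-anti-flexible family algebra, with `prec ω` and `succ ω` standing for
`≺_ω` and `≻_ω`. -/
structure IsPreAntiFlexibleFamily [Mul Ω] (prec succ : Ω → A →ₗ[k] A →ₗ[k] A) : Prop where
  succ_prec : ∀ (α β : Ω) (x y z : A),
    prec β (succ α x y) z - succ α x (prec β y z) =
      prec α (succ β z y) x - succ β z (prec α y x)
  succ_succ : ∀ (α β : Ω) (x y z : A),
    succ (α * β) (succ α x y + prec β x y) z - succ α x (succ β y z) =
      prec α (prec β z y) x - prec (β * α) z (succ β y x + prec α y x)

/-- The product `x ∗_{α,β} y = x ≻_α y + x ≺_β y`. -/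
def succAddPrec (prec succ : Ω → A →ₗ[k] A →ₗ[k] A) (α β : Ω) : A →ₗ[k] A →ₗ[k] A :=
  succ α + prec β

theorem succAddPrec_apply (prec succ : Ω → A →ₗ[k] A →ₗ[k] A) (α β : Ω) (x y : A) :
    succAddPrec prec succ α β x y = succ α x y + prec β x y :=
  rfl

theorem relAssociator_succAddPrec [Mul Ω] (prec succ : Ω → A →ₗ[k] A →ₗ[k] A)
    (α β γ : Ω) (x y z : A) :
    relAssociator (succAddPrec prec succ) α β γ x y z =
      (succ (α * β) (succ α x y + prec β x y) z - succ α x (succ β y z)) +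
        (prec γ (succ α x y) z - succ α x (prec γ y z)) +
        (prec γ (prec β x y) z - prec (β * γ) x (succ β y z + prec γ y z)) := by
  simp only [relAssociator, succAddPrec_apply, map_add, LinearMap.add_apply]
  abel

theorem IsPreAntiFlexibleFamily.isRelAntiFlexible_succAddPrec [Mul Ω]
    {prec succ : Ω → A →ₗ[k] A →ₗ[k] A} (h : IsPreAntiFlexibleFamily prec succ) :
    IsRelAntiFlexible (succAddPrec prec succ) := by
  intro α β γ x y z
  rw [relAssociator_succAddPrec, relAssociator_succAddPrec, h.succ_succ α β, h.succ_prec α γ,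
    h.succ_succ γ β]
  abel

end FamilyProducts

theorem preLieFamilyCommutator_is_relativeLie_general
    (k : Type*) [CommSemiring k] (Ω : Type*) [CommMagma Ω]
    (A : Type*) [AddCommGroup A] [Module k A]
    (prec succ : Ω → A →ₗ[k] A →ₗ[k] A)
    (h1 : ∀ (α β : Ω) (x y z : A),
      prec β (succ α x y) z - succ α x (prec β y z) =
        prec α (succ β z y) x - succ β z (prec α y x))
    (h2 : ∀ (α β : Ω) (x y z : A),
      succ (α * β) (succ α x y + prec β x y) z - succ α x (succ β y z) =
        prec α (prec β z y) x - prec (β * α) z (succ β y x + prec α y x))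
    (tri : Ω → A → A → A)
    (htri : ∀ (ω : Ω) (x y : A), tri ω x y = succ ω x y - prec ω y x)
    (star : Ω → Ω → A → A → A)
    (hstar : ∀ (α β : Ω) (x y : A), star α β x y = succ α x y + prec β x y)
    (br : Ω → Ω → A → A → A)
    (hbr : ∀ (α β : Ω) (x y : A), br α β x y = tri α x y - tri β y x) :
    (∀ (α β : Ω) (x y : A),
      tri α x y - tri β y x = (succ α x y + prec β x y) - (succ β y x + prec α y x)) ∧
    (∀ (α β : Ω) (x y : A), br α β x y = star α β x y - star β α y x) ∧
    (∀ (α β : Ω) (x y : A), br α β x y + br β α y x = 0) ∧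
    (∀ (α β γ : Ω) (x y z : A),
      br (α * β) γ (br α β x y) z + br (β * γ) α (br β γ y z) x +
        br (γ * α) β (br γ α z x) y = 0) := by
  have tri_sub : ∀ (α β : Ω) (x y : A),
      tri α x y - tri β y x = (succ α x y + prec β x y) - (succ β y x + prec α y x) := by
    intro α β x y
    rw [htri, htri]
    abel
  have br_eq : ∀ (α β : Ω) (x y : A),
      br α β x y = relCommutator (succAddPrec prec succ) α β x y := by
    intro α β x y
    rw [hbr, tri_sub, relCommutator_apply, succAddPrec_apply, succAddPrec_apply]
  have lie : IsRelativeLie (relCommutator (succAddPrec prec succ)) :=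
    (IsPreAntiFlexibleFamily.mk h1 h2).isRelAntiFlexible_succAddPrec.isRelativeLie_relCommutator
  refine ⟨tri_sub, fun α β x y => ?_, fun α β x y => ?_, fun α β γ x y z => ?_⟩
  · rw [hbr, tri_sub, hstar, hstar]
  · simpa only [br_eq] using lie.add_swap α β x y
  · simpa only [br_eq] using lie.jacobi α β γ x y z

/-- the bracket `[x,y]_{α,β} := x ▷_α y − y ▷_β x` built from
`x ▷_ω y := x ≻_ω y − y ≺_ω x` coincides with the commutator of
`x ∗_{α,β} y := x ≻_α y + x ≺_β y`, and turns A into an Ω-relative Lie algebra. -/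
theorem preLieFamilyCommutator_is_relativeLie
    (k : Type*) [Field k] (Ω : Type*) [CommSemigroup Ω]
    (A : Type*) [AddCommGroup A] [Module k A]
    (prec succ : Ω → A →ₗ[k] A →ₗ[k] A)
    (h1 : ∀ (α β : Ω) (x y z : A),
      prec β (succ α x y) z - succ α x (prec β y z) =
        prec α (succ β z y) x - succ β z (prec α y x))
    (h2 : ∀ (α β : Ω) (x y z : A),
      succ (α * β) (succ α x y + prec β x y) z - succ α x (succ β y z) =
        prec α (prec β z y) x - prec (β * α) z (succ β y x + prec α y x))
    (tri : Ω → A → A → A)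
    (htri : ∀ (ω : Ω) (x y : A), tri ω x y = succ ω x y - prec ω y x)
    (star : Ω → Ω → A → A → A)
    (hstar : ∀ (α β : Ω) (x y : A), star α β x y = succ α x y + prec β x y)
    (br : Ω → Ω → A → A → A)
    (hbr : ∀ (α β : Ω) (x y : A), br α β x y = tri α x y - tri β y x) :
    (∀ (α β : Ω) (x y : A),
      tri α x y - tri β y x = (succ α x y + prec β x y) - (succ β y x + prec α y x)) ∧
    (∀ (α β : Ω) (x y : A), br α β x y = star α β x y - star β α y x) ∧
    (∀ (α β : Ω) (x y : A), br α β x y + br β α y x = 0) ∧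
    (∀ (α β γ : Ω) (x y z : A),
      br (α * β) γ (br α β x y) z + br (β * γ) α (br β γ y z) x +
        br (γ * α) β (br γ α z x) y = 0) :=
  preLieFamilyCommutator_is_relativeLie_general k Ω A prec succ h1 h2 tri htri star hstar br hbr
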